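/- Fix an integer n ≥ 1. Suppose the noises satisfy the Bernstein condition with parameters (σ_t, B): E[|ε_t|^m | F_{t-1}] ≤ (1/2) m! B^{m−2} σ_t² for all m ≥ 2 and all 1 ≤ t ≤ n, with σ_t F_{t-1}-measurable, and suppose Σ_{i=1}^n σ_i² ‖G_i‖² ≤ C_n² almost surely, where C_n ≥ 0 is deterministic. Then for every r ≥ 0, P( sup_{1 ≤ t ≤ n} ‖(ρI + V_t)^{-1/2} M_t‖ ≥ r ) ≤ 2 exp( − r² / (2 (C_n² + B r)) ). -/

import Mathlib

open MeasureTheory Filter Real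
open scoped RealInnerProductSpace

noncomputable def outerProd {H : Type*} [NormedAddCommGroup H] [InnerProductSpace ℝ H]
    (x : H) : H →L[ℝ] H :=
  (innerSL ℝ x).smulRight x

open scoped ENNReal

/-!
For a random step `Y ↦ u + ε • v` in a Hilbert space, `cosh ‖u + ε • v‖` is at most a term linear in
`ε`, which has conditional mean zero, plus `cosh ‖u‖ * (exp (‖v‖ * |ε|) - ‖v‖ * |ε|)`; this follows
from the convexity of `x ↦ cosh √x`. Expanding the exponential, the Bernstein condition bounds the
conditional mean of the second factor by `1 + ‖v‖² σ² / (2 (1 - ‖v‖ B)) ≤ exp (κ ‖v‖² σ²)`.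

The self-normalised sum `(Λ + V_t)^{-1/2} M_t` makes exactly such steps: replacing `Λ + V_t` by the
larger operator `Λ + V_{t+1}` contracts norms, and the new noise has coefficient `G_{t+1}` with
`‖G_{t+1}‖ ≤ 1`. So `exp (-κ ∑ σ_i² ‖G_i‖²) cosh (l ‖Y_t‖)` is a nonnegative supermartingale for
`κ = l² / (2 (1 - l B))`, to which Ville's inequality applies; it remains to choose `l`.

Only `Λ + V_t` is a measurable function of the data a priori. Norms and inner products of vectors
`(Λ + V_t)^{-1/2} x` are measurable because they involve the square root only through its square:
`⟪Q⁻¹ x, Q⁻¹ y⟫ = ⟪x, (Q²)⁻¹ y⟫` for symmetric `Q`.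
-/

theorem convexOn_cosh_sqrt : ConvexOn ℝ (Set.Ici 0) fun x : ℝ ↦ cosh √x := by
  refine ⟨convex_Ici 0, fun x hx y hy a b ha hb hab ↦ ?_⟩
  have hsum {z : ℝ} (hz : 0 ≤ z) :
      HasSum (fun k : ℕ ↦ z ^ k / ((2 * k).factorial : ℝ)) (cosh √z) := by
    simpa only [pow_mul, sq_sqrt hz] using hasSum_cosh √z
  refine hasSum_le (fun k ↦ ?_) (hsum (convex_Ici 0 hx hy ha hb hab))
    (((hsum hx).const_smul a).add ((hsum hy).const_smul b))
  calc (a • x + b • y) ^ k / ((2 * k).factorial : ℝ)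
      ≤ (a • x ^ k + b • y ^ k) / ((2 * k).factorial : ℝ) := by
        gcongr
        exact (convexOn_pow k).2 hx hy ha hb hab
    _ = a • (x ^ k / ((2 * k).factorial : ℝ)) + b • (y ^ k / ((2 * k).factorial : ℝ)) := by
        simp only [smul_eq_mul]
        ring

theorem cosh_norm_add_le {E : Type*} [NormedAddCommGroup E] [InnerProductSpace ℝ E] (u v : E) :
    cosh ‖u + v‖ ≤ cosh ‖u‖ * (exp ‖v‖ - ‖v‖) + ⟪u, v⟫ * (sinh ‖u‖ / ‖u‖) := by
  set a := ‖u‖ with ha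
  set b := ‖v‖ with hb
  set τ := ⟪u, v⟫ / (a * b) with hτ
  have hτ_abs : |τ| ≤ 1 := abs_real_inner_div_norm_mul_norm_le_one u v
  have h_inner : ⟪u, v⟫ = τ * (a * b) := by
    rcases eq_or_ne (a * b) 0 with hab | hab
    · have := abs_real_inner_le_norm u v
      rw [← ha, ← hb, hab] at this
      rw [hab, mul_zero, abs_nonpos_iff.1 this]
    · rw [hτ, div_mul_cancel₀ _ hab]
  have h_lin : ⟪u, v⟫ * (sinh a / a) = τ * b * sinh a := by
    rcases eq_or_ne a 0 with ha0 | ha0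
    · simp [ha0]
    · rw [h_inner]
      field_simp
  have h_sq : ‖u + v‖ ^ 2 = (1 + τ) / 2 * (a + b) ^ 2 + (1 - τ) / 2 * (a - b) ^ 2 := by
    rw [norm_add_sq_real, ← ha, ← hb, h_inner]
    ring
  have h_conv : cosh ‖u + v‖ ≤ (1 + τ) / 2 * cosh (a + b) + (1 - τ) / 2 * cosh (a - b) := by
    have := convexOn_cosh_sqrt.2 (sq_nonneg (a + b)) (sq_nonneg (a - b))
      (by linarith [neg_le_of_abs_le hτ_abs] : 0 ≤ (1 + τ) / 2)
      (by linarith [le_of_abs_le hτ_abs] : 0 ≤ (1 - τ) / 2) (by ring)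
    simpa only [smul_eq_mul, ← h_sq, sqrt_sq_eq_abs, cosh_abs] using this
  have h_sinh : τ * sinh a ≤ cosh a :=
    calc τ * sinh a ≤ 1 * sinh a :=
          mul_le_mul_of_nonneg_right (le_of_abs_le hτ_abs) (sinh_nonneg_iff.2 (norm_nonneg u))
      _ ≤ cosh a := by rw [one_mul]; exact (sinh_lt_cosh a).le
  calc cosh ‖u + v‖ ≤ (1 + τ) / 2 * cosh (a + b) + (1 - τ) / 2 * cosh (a - b) := h_conv
    _ = cosh a * cosh b + τ * b * sinh a + τ * sinh a * (sinh b - b) := by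
        rw [cosh_add, cosh_sub]
        ring
    _ ≤ cosh a * cosh b + τ * b * sinh a + cosh a * (sinh b - b) := by
        gcongr
        exact sub_nonneg.2 (self_le_sinh_iff.2 (norm_nonneg v))
    _ = cosh a * (exp b - b) + ⟪u, v⟫ * (sinh a / a) := by
        rw [h_lin, ← cosh_add_sinh b]
        ring

section RingInverse

variable {R : Type*} [NormedRing R]

/- Inversion is continuous at the units of a complete normed ring, so the proof passes to the
completion. -/
theorem continuousOn_ringInverse : ContinuousOn Ring.inverse {x : R | IsUnit x} := by
  let ι : R →+* UniformSpace.Completion R := UniformSpace.Completion.coeRingHom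
  have hι : Isometry ι := UniformSpace.Completion.coe_isometry
  have h_map (u : Rˣ) : ι (Ring.inverse u) = Ring.inverse (ι u) := by
    rw [Ring.inverse_unit]
    exact (Ring.inverse_unit (Units.map (ι : R →* UniformSpace.Completion R) u)).symm
  rw [hι.isEmbedding.continuousOn_iff]
  rintro _ ⟨u, rfl⟩
  have h_inv : ContinuousAt Ring.inverse (ι u) :=
    NormedRing.inverse_continuousAt (Units.map (ι : R →* UniformSpace.Completion R) u)
  refine (h_inv.comp hι.continuous.continuousAt).continuousWithinAt.congr ?_ (h_map u)
  rintro _ ⟨v, rfl⟩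
  exact h_map v

theorem stronglyMeasurable_ringInverse {Ω : Type*} {m : MeasurableSpace Ω} {A : Ω → R}
    (hA : StronglyMeasurable A) (hA_unit : ∀ ω, IsUnit (A ω)) :
    StronglyMeasurable fun ω ↦ Ring.inverse (A ω) := by
  have h_restrict : StronglyMeasurable (Set.codRestrict A {x : R | IsUnit x} hA_unit) :=
    (Embedding.comp_stronglyMeasurable_iff Topology.IsEmbedding.subtypeVal).1 hA
  exact continuousOn_ringInverse.domRestrict.comp_stronglyMeasurable h_restrict

end RingInverse

section CondExp

variable {Ω : Type*} {m m0 : MeasurableSpace Ω} {μ : Measure Ω}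

theorem lintegral_mul_condLExp (hm : m ≤ m0) [SigmaFinite (μ.trim hm)] {w f : Ω → ℝ≥0∞}
    (hw : Measurable[m] w) (hf : AEMeasurable f μ) :
    ∫⁻ ω, w ω * μ⁻[f | m] ω ∂μ = ∫⁻ ω, w ω * f ω ∂μ := by
  have h_trim : (μ.withDensity μ⁻[f | m]).trim hm = (μ.withDensity f).trim hm := by
    refine @Measure.ext _ m _ _ fun s hs ↦ ?_
    rw [trim_measurableSet_eq hm hs, trim_measurableSet_eq hm hs, withDensity_apply _ (hm s hs),
      withDensity_apply _ (hm s hs), setLIntegral_condLExp hm μ f hs]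
  have h_density {g : Ω → ℝ≥0∞} (hg : AEMeasurable g μ) :
      ∫⁻ ω, w ω * g ω ∂μ = ∫⁻ ω, w ω ∂(μ.withDensity g).trim hm := by
    rw [lintegral_trim hm hw, lintegral_withDensity_eq_lintegral_mul₀ hg
      (hw.mono hm le_rfl).aemeasurable]
    simp only [Pi.mul_apply, mul_comm]
  rw [h_density hf, ← h_trim, h_density (measurable_condLExp' m μ f).aemeasurable]

theorem lintegral_mul_ofReal_le_of_condExp_le (hm : m ≤ m0) [SigmaFinite (μ.trim hm)]
    {f g : Ω → ℝ} (hf : Integrable f μ) (hf_nonneg : 0 ≤ᵐ[μ] f) (hfg : μ[f | m] ≤ᵐ[μ] g)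
    {w : Ω → ℝ≥0∞} (hw : Measurable[m] w) :
    ∫⁻ ω, w ω * ENNReal.ofReal (f ω) ∂μ ≤ ∫⁻ ω, w ω * ENNReal.ofReal (g ω) ∂μ := by
  rw [← lintegral_mul_condLExp hm hw hf.aemeasurable.ennreal_ofReal]
  refine lintegral_mono_ae ?_
  filter_upwards [condLExp_ofReal m hf hf_nonneg, hfg] with ω h_eq h_le
  rw [h_eq]
  gcongr

theorem integral_mul_eq_zero_of_condExp_eq_zero (hm : m ≤ m0) [SigmaFinite (μ.trim hm)]
    {f g : Ω → ℝ} (hf : StronglyMeasurable[m] f) (hg : Integrable g μ)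
    (hfg : Integrable (f * g) μ) (hg_zero : μ[g | m] =ᵐ[μ] 0) : ∫ ω, f ω * g ω ∂μ = 0 := by
  have h_cond : μ[f * g | m] =ᵐ[μ] 0 := by
    filter_upwards [condExp_mul_of_stronglyMeasurable_left hf hfg hg, hg_zero] with ω h_pull h_zero
    rw [h_pull, Pi.mul_apply, h_zero, Pi.zero_apply, mul_zero]
  calc ∫ ω, f ω * g ω ∂μ = ∫ ω, μ[f * g | m] ω ∂μ := (integral_condExp hm).symm
    _ = 0 := integral_eq_zero_of_ae h_cond

-- If the right-hand side is finite, then `f` and `ℓ` are integrable, so that `∫ ℓ = 0`.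
theorem lintegral_ofReal_le_of_le_add_of_norm_le {f g ℓ : Ω → ℝ} (hf : AEMeasurable f μ)
    (hℓ : AEMeasurable ℓ μ) (hgf : ∀ ω, g ω ≤ f ω + ℓ ω) (hℓf : ∀ ω, ‖ℓ ω‖ ≤ f ω)
    (hℓ_zero : Integrable ℓ μ → ∫ ω, ℓ ω ∂μ = 0) :
    ∫⁻ ω, ENNReal.ofReal (g ω) ∂μ ≤ ∫⁻ ω, ENNReal.ofReal (f ω) ∂μ := by
  have hf_nonneg (ω : Ω) : 0 ≤ f ω := (norm_nonneg _).trans (hℓf ω)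
  have hfℓ_nonneg (ω : Ω) : 0 ≤ f ω + ℓ ω := by linarith [neg_le_of_abs_le (hℓf ω)]
  rcases eq_top_or_lt_top (∫⁻ ω, ENNReal.ofReal (f ω) ∂μ) with hf_top | hf_lt_top
  · exact hf_top.symm ▸ le_top
  have hf_int : Integrable f μ := ⟨hf.aestronglyMeasurable,
    (hasFiniteIntegral_iff_ofReal (ae_of_all _ hf_nonneg)).2 hf_lt_top⟩
  have hℓ_int : Integrable ℓ μ := hf_int.mono' hℓ.aestronglyMeasurable (ae_of_all _ hℓf)
  calc ∫⁻ ω, ENNReal.ofReal (g ω) ∂μ ≤ ∫⁻ ω, ENNReal.ofReal (f ω + ℓ ω) ∂μ :=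
        lintegral_mono fun ω ↦ ENNReal.ofReal_le_ofReal (hgf ω)
    _ = ENNReal.ofReal (∫ ω, f ω + ℓ ω ∂μ) :=
        (ofReal_integral_eq_lintegral_ofReal (hf_int.add hℓ_int) (ae_of_all _ hfℓ_nonneg)).symm
    _ = ENNReal.ofReal (∫ ω, f ω ∂μ) := by
        rw [integral_add hf_int hℓ_int, hℓ_zero hℓ_int, add_zero]
    _ = ∫⁻ ω, ENNReal.ofReal (f ω) ∂μ :=
        ofReal_integral_eq_lintegral_ofReal hf_int (ae_of_all _ hf_nonneg)

end CondExp

theorem abs_inner_mul_sinh_norm_div_norm_le {E : Type*} [NormedAddCommGroup E]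
    [InnerProductSpace ℝ E] (u v : E) : |⟪u, v⟫ * (sinh ‖u‖ / ‖u‖)| ≤ cosh ‖u‖ * ‖v‖ := by
  have : 0 ≤ sinh ‖u‖ := sinh_nonneg_iff.2 (norm_nonneg u)
  calc |⟪u, v⟫ * (sinh ‖u‖ / ‖u‖)| = |⟪u, v⟫| * (sinh ‖u‖ / ‖u‖) := by
        rw [abs_mul, abs_of_nonneg (by positivity : 0 ≤ sinh ‖u‖ / ‖u‖)]
    _ ≤ ‖u‖ * ‖v‖ * (sinh ‖u‖ / ‖u‖) := by
        gcongr
        exact abs_real_inner_le_norm u v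
    _ = sinh ‖u‖ * (‖u‖ / ‖u‖) * ‖v‖ := by ring
    _ ≤ sinh ‖u‖ * 1 * ‖v‖ := by
        gcongr
        exact div_self_le_one ‖u‖
    _ ≤ cosh ‖u‖ * ‖v‖ := by
        rw [mul_one]
        gcongr
        exact (sinh_lt_cosh _).le

theorem hasSum_exp_sub_one_sub (x : ℝ) :
    HasSum (fun k : ℕ ↦ x ^ (k + 2) / ((k + 2).factorial : ℝ)) (exp x - 1 - x) := by
  have h_exp : HasSum (fun k : ℕ ↦ x ^ k / (k.factorial : ℝ)) (exp x) := by
    simpa only [exp_eq_exp_ℝ] using NormedSpace.expSeries_div_hasSum_exp x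
  simpa [Finset.sum_range_succ, sub_sub] using (hasSum_nat_add_iff' 2).2 h_exp

/-- The real variable `ε` is centred given `m` and obeys the conditional Bernstein moment condition
with scale `B` and (random) standard deviation proxy `σ`. Integrability of the absolute moments is
part of the notion because `condExp` is `0` on functions that are not integrable. -/
structure IsBernsteinNoise {Ω : Type*} (m : MeasurableSpace Ω) {m0 : MeasurableSpace Ω}
    (μ : Measure Ω) (ε σ : Ω → ℝ) (B : ℝ) : Prop where
  integrable : Integrable ε μ
  condExp_eq_zero : μ[ε | m] =ᵐ[μ] 0
  integrable_abs_pow (k : ℕ) : Integrable (fun ω ↦ |ε ω| ^ k) μ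
  condExp_abs_pow_le (k : ℕ) (hk : 2 ≤ k) : μ[fun ω ↦ |ε ω| ^ k | m] ≤ᵐ[μ]
    fun ω ↦ 1 / 2 * (k.factorial : ℝ) * B ^ (k - 2) * σ ω ^ 2

namespace IsBernsteinNoise

variable {Ω : Type*} {m m0 : MeasurableSpace Ω} {μ : Measure Ω} {ε σ : Ω → ℝ} {B : ℝ}

theorem lintegral_mul_pow_div_factorial_le (h : IsBernsteinNoise m μ ε σ B) (hm : m ≤ m0)
    [SigmaFinite (μ.trim hm)] {η : Ω → ℝ} (hη : Measurable[m] η) (hη_nonneg : ∀ ω, 0 ≤ η ω)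
    {w : Ω → ℝ≥0∞} (hw : Measurable[m] w) (k : ℕ) :
    ∫⁻ ω, w ω * ENNReal.ofReal ((η ω * |ε ω|) ^ (k + 2) / ((k + 2).factorial : ℝ)) ∂μ ≤
      ∫⁻ ω, w ω * ENNReal.ofReal (η ω ^ 2 * σ ω ^ 2 / 2 * (η ω * B) ^ k) ∂μ := by
  have h_coeff (ω : Ω) : 0 ≤ η ω ^ (k + 2) / ((k + 2).factorial : ℝ) :=
    div_nonneg (pow_nonneg (hη_nonneg ω) _) (Nat.cast_nonneg _)
  have h_weight : Measurable[m] fun ω ↦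
      w ω * ENNReal.ofReal (η ω ^ (k + 2) / ((k + 2).factorial : ℝ)) :=
    hw.mul ((hη.pow_const _).div_const _).ennreal_ofReal
  convert lintegral_mul_ofReal_le_of_condExp_le hm (h.integrable_abs_pow (k + 2))
    (ae_of_all _ fun ω ↦ by positivity) (h.condExp_abs_pow_le (k + 2) (by omega)) h_weight
    using 3 with ω ω
  · rw [mul_assoc, ← ENNReal.ofReal_mul (h_coeff ω)]
    ring_nf
  · rw [mul_assoc, ← ENNReal.ofReal_mul (h_coeff ω), Nat.add_sub_cancel]
    congr 2
    field_simp
    ring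

theorem lintegral_mul_exp_sub_one_sub_le (h : IsBernsteinNoise m μ ε σ B) (hm : m ≤ m0)
    [SigmaFinite (μ.trim hm)] (hB : 0 ≤ B) (hσ : AEMeasurable σ μ) {η : Ω → ℝ}
    (hη : Measurable[m] η) (hη_nonneg : ∀ ω, 0 ≤ η ω) (hηB : ∀ ω, η ω * B < 1)
    {w : Ω → ℝ≥0∞} (hw : Measurable[m] w) :
    ∫⁻ ω, w ω * ENNReal.ofReal (exp (η ω * |ε ω|) - 1 - η ω * |ε ω|) ∂μ ≤
      ∫⁻ ω, w ω * ENNReal.ofReal (η ω ^ 2 * σ ω ^ 2 / (2 * (1 - η ω * B))) ∂μ := by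
  have hε : AEMeasurable ε μ := h.integrable.aemeasurable
  have hη' : Measurable η := hη.mono hm le_rfl
  have hw' : Measurable w := hw.mono hm le_rfl
  have h_exp (ω : Ω) : w ω * ENNReal.ofReal (exp (η ω * |ε ω|) - 1 - η ω * |ε ω|) =
      ∑' k : ℕ, w ω * ENNReal.ofReal ((η ω * |ε ω|) ^ (k + 2) / ((k + 2).factorial : ℝ)) := by
    have h_sum := hasSum_exp_sub_one_sub (η ω * |ε ω|)
    have := hη_nonneg ω
    rw [ENNReal.tsum_mul_left, ← h_sum.tsum_eq,
      ENNReal.ofReal_tsum_of_nonneg (fun k ↦ by positivity) h_sum.summable]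
  have h_geom (ω : Ω) : ∑' k : ℕ, w ω * ENNReal.ofReal (η ω ^ 2 * σ ω ^ 2 / 2 * (η ω * B) ^ k) =
      w ω * ENNReal.ofReal (η ω ^ 2 * σ ω ^ 2 / (2 * (1 - η ω * B))) := by
    have hηB_nonneg : 0 ≤ η ω * B := mul_nonneg (hη_nonneg ω) hB
    have h_sum := (hasSum_geometric_of_lt_one hηB_nonneg (hηB ω)).mul_left (η ω ^ 2 * σ ω ^ 2 / 2)
    rw [ENNReal.tsum_mul_left, ← ENNReal.ofReal_tsum_of_nonneg (fun k ↦ by positivity)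
      h_sum.summable, h_sum.tsum_eq, ← div_eq_mul_inv, div_div]
  simp only [h_exp, ← h_geom]
  rw [lintegral_tsum fun k ↦ by fun_prop, lintegral_tsum fun k ↦ by fun_prop]
  exact ENNReal.tsum_le_tsum (h.lintegral_mul_pow_div_factorial_le hm hη hη_nonneg hw)

theorem lintegral_mul_exp_sub_le (h : IsBernsteinNoise m μ ε σ B) (hm : m ≤ m0)
    [SigmaFinite (μ.trim hm)] (hB : 0 ≤ B) (hσ : AEMeasurable σ μ) {η : Ω → ℝ}
    (hη : Measurable[m] η) (hη_nonneg : ∀ ω, 0 ≤ η ω) (hηB : ∀ ω, η ω * B < 1)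
    {w : Ω → ℝ≥0∞} (hw : Measurable[m] w) :
    ∫⁻ ω, w ω * ENNReal.ofReal (exp (η ω * |ε ω|) - η ω * |ε ω|) ∂μ ≤
      ∫⁻ ω, w ω * ENNReal.ofReal (1 + η ω ^ 2 * σ ω ^ 2 / (2 * (1 - η ω * B))) ∂μ := by
  have hw' : AEMeasurable w μ := (hw.mono hm le_rfl).aemeasurable
  have h_split {x : Ω → ℝ} (hx : ∀ ω, 0 ≤ x ω) :
      ∫⁻ ω, w ω * ENNReal.ofReal (1 + x ω) ∂μ =
        ∫⁻ ω, w ω ∂μ + ∫⁻ ω, w ω * ENNReal.ofReal (x ω) ∂μ := by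
    rw [← lintegral_add_left' hw']
    simp only [ENNReal.ofReal_add zero_le_one (hx _), ENNReal.ofReal_one, mul_add, mul_one]
  have h_exp (ω : Ω) : exp (η ω * |ε ω|) - η ω * |ε ω| =
      1 + (exp (η ω * |ε ω|) - 1 - η ω * |ε ω|) := by ring
  simp only [h_exp]
  rw [h_split fun ω ↦ by linarith [add_one_le_exp (η ω * |ε ω|)],
    h_split fun ω ↦ div_nonneg (by positivity) (by linarith [hηB ω])]
  gcongr ∫⁻ ω, w ω ∂μ + ?_
  exact h.lintegral_mul_exp_sub_one_sub_le hm hB hσ hη hη_nonneg hηB hw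

variable {E : Type*} [NormedAddCommGroup E] [InnerProductSpace ℝ E]

theorem lintegral_mul_cosh_norm_add_smul_le (h : IsBernsteinNoise m μ ε σ B) (hm : m ≤ m0)
    [SigmaFinite (μ.trim hm)] (hB : 0 ≤ B) (hσ : AEMeasurable σ μ) {u v : Ω → E}
    (hu : Measurable[m] fun ω ↦ ‖u ω‖) (hv : Measurable[m] fun ω ↦ ‖v ω‖)
    (huv : Measurable[m] fun ω ↦ ⟪u ω, v ω⟫) (hvB : ∀ ω, ‖v ω‖ * B < 1)
    {w : Ω → ℝ} (hw : Measurable[m] w) (hw_nonneg : ∀ ω, 0 ≤ w ω) :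
    ∫⁻ ω, ENNReal.ofReal (w ω * cosh ‖u ω + ε ω • v ω‖) ∂μ ≤
      ∫⁻ ω, ENNReal.ofReal
        (w ω * cosh ‖u ω‖ * (1 + ‖v ω‖ ^ 2 * σ ω ^ 2 / (2 * (1 - ‖v ω‖ * B)))) ∂μ := by
  set F : Ω → ℝ := fun ω ↦ w ω * cosh ‖u ω‖ * (exp (‖v ω‖ * |ε ω|) - ‖v ω‖ * |ε ω|) with hF
  set L : Ω → ℝ := fun ω ↦ w ω * (⟪u ω, v ω⟫ * (sinh ‖u ω‖ / ‖u ω‖)) with hL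
  have hwu (ω : Ω) : 0 ≤ w ω * cosh ‖u ω‖ := mul_nonneg (hw_nonneg ω) (cosh_pos _).le
  have hwu_meas : Measurable[m] fun ω ↦ w ω * cosh ‖u ω‖ := hw.mul (measurable_cosh.comp hu)
  have hF_le := h.lintegral_mul_exp_sub_le hm hB hσ hv (fun ω ↦ norm_nonneg (v ω)) hvB
    hwu_meas.ennreal_ofReal
  simp only [← ENNReal.ofReal_mul (hwu _)] at hF_le
  have hF_meas : AEMeasurable F μ := by
    have hvε : AEMeasurable (fun ω ↦ ‖v ω‖ * |ε ω|) μ :=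
      (hv.mono hm le_rfl).aemeasurable.mul h.integrable.aemeasurable.abs
    exact (hwu_meas.mono hm le_rfl).aemeasurable.mul
      ((measurable_exp.comp_aemeasurable hvε).sub hvε)
  have hL_meas : Measurable[m] L := hw.mul (huv.mul ((measurable_sinh.comp hu).div hu))
  have hLε_le (ω : Ω) : ‖L ω * ε ω‖ ≤ F ω :=
    calc ‖L ω * ε ω‖ = w ω * |⟪u ω, v ω⟫ * (sinh ‖u ω‖ / ‖u ω‖)| * |ε ω| := by
          rw [norm_eq_abs, abs_mul, abs_mul, abs_of_nonneg (hw_nonneg ω)]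
      _ ≤ w ω * (cosh ‖u ω‖ * ‖v ω‖) * |ε ω| := by
          have := hw_nonneg ω
          gcongr
          exact abs_inner_mul_sinh_norm_div_norm_le _ _
      _ = w ω * cosh ‖u ω‖ * (‖v ω‖ * |ε ω|) := by ring
      _ ≤ F ω := by
          refine mul_le_mul_of_nonneg_left ?_ (hwu ω)
          linarith [two_mul_le_exp (x := ‖v ω‖ * |ε ω|)]
  have h_cosh (ω : Ω) : w ω * cosh ‖u ω + ε ω • v ω‖ ≤ F ω + L ω * ε ω := by
    have := mul_le_mul_of_nonneg_left (cosh_norm_add_le (u ω) (ε ω • v ω)) (hw_nonneg ω)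
    rw [norm_smul, norm_eq_abs, inner_smul_right] at this
    refine this.trans_eq ?_
    simp only [hF, hL]
    ring_nf
  refine (lintegral_ofReal_le_of_le_add_of_norm_le hF_meas
    ((hL_meas.mono hm le_rfl).aemeasurable.mul h.integrable.aemeasurable) h_cosh hLε_le
    fun hLε_int ↦ ?_).trans hF_le
  exact integral_mul_eq_zero_of_condExp_eq_zero hm hL_meas.stronglyMeasurable h.integrable hLε_int
    h.condExp_eq_zero

theorem setLIntegral_mul_cosh_norm_add_smul_le (h : IsBernsteinNoise m μ ε σ B) (hm : m ≤ m0)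
    [SigmaFinite (μ.trim hm)] (hB : 0 ≤ B) (hσ : AEMeasurable σ μ) {u v : Ω → E}
    (hu : Measurable[m] fun ω ↦ ‖u ω‖) (hv : Measurable[m] fun ω ↦ ‖v ω‖)
    (huv : Measurable[m] fun ω ↦ ⟪u ω, v ω⟫) (hvB : ∀ ω, ‖v ω‖ * B < 1)
    {w : Ω → ℝ} (hw : Measurable[m] w) (hw_nonneg : ∀ ω, 0 ≤ w ω)
    {s : Set Ω} (hs : MeasurableSet[m] s) :
    ∫⁻ ω in s, ENNReal.ofReal (w ω * cosh ‖u ω + ε ω • v ω‖) ∂μ ≤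
      ∫⁻ ω in s, ENNReal.ofReal
        (w ω * cosh ‖u ω‖ * (1 + ‖v ω‖ ^ 2 * σ ω ^ 2 / (2 * (1 - ‖v ω‖ * B)))) ∂μ := by
  have h_ind (f : Ω → ℝ) : ∫⁻ ω in s, ENNReal.ofReal (w ω * f ω) ∂μ =
      ∫⁻ ω, ENNReal.ofReal (s.indicator w ω * f ω) ∂μ := by
    rw [← lintegral_indicator (hm s hs)]
    refine lintegral_congr fun ω ↦ ?_
    by_cases hω : ω ∈ s <;> simp [hω]
  have h_step := h.lintegral_mul_cosh_norm_add_smul_le hm hB hσ hu hv huv hvB (hw.indicator hs)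
    (Set.indicator_nonneg fun ω _ ↦ hw_nonneg ω)
  simp only [mul_assoc] at h_step ⊢
  rwa [h_ind, h_ind]

end IsBernsteinNoise

theorem mul_measure_inter_exists_le_le_setLIntegral {Ω : Type*} {m0 : MeasurableSpace Ω}
    {μ : Measure Ω} (ℱ : Filtration ℕ m0) {f : ℕ → Ω → ℝ≥0∞} {n : ℕ}
    (hf : ∀ t ≤ n, Measurable[ℱ t] (f t))
    (h_step : ∀ t < n, ∀ s, MeasurableSet[ℱ t] s →
      ∫⁻ ω in s, f (t + 1) ω ∂μ ≤ ∫⁻ ω in s, f t ω ∂μ)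
    (q : ℝ≥0∞) {t : ℕ} (ht : t ≤ n) {s : Set Ω} (hs : MeasurableSet[ℱ t] s) :
    q * μ (s ∩ {ω | ∃ k, t ≤ k ∧ k ≤ n ∧ q ≤ f k ω}) ≤ ∫⁻ ω in s, f t ω ∂μ := by
  have h_markov {t : ℕ} (ht : t ≤ n) {s : Set Ω} :
      q * μ (s ∩ {ω | q ≤ f t ω}) ≤ ∫⁻ ω in s ∩ {ω | q ≤ f t ω}, f t ω ∂μ := by
    have h_meas : Measurable (f t) := (hf t ht).mono (ℱ.le t) le_rfl
    rw [← setLIntegral_const]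
    exact setLIntegral_mono h_meas fun ω hω ↦ hω.2
  induction ht using Nat.decreasingInduction generalizing s with
  | self =>
    calc q * μ (s ∩ {ω | ∃ k, n ≤ k ∧ k ≤ n ∧ q ≤ f k ω})
        ≤ q * μ (s ∩ {ω | q ≤ f n ω}) := by
          gcongr
          rintro ⟨k, hnk, hkn, hk⟩
          rwa [le_antisymm hnk hkn]
      _ ≤ ∫⁻ ω in s ∩ {ω | q ≤ f n ω}, f n ω ∂μ := h_markov le_rfl
      _ ≤ ∫⁻ ω in s, f n ω ∂μ := lintegral_mono_set Set.inter_subset_left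
  | of_succ t ht ih =>
    set a : Set Ω := {ω | q ≤ f t ω}
    have ha : MeasurableSet[ℱ t] a := measurableSet_le measurable_const (hf t ht.le)
    have h_cover : s ∩ {ω | ∃ k, t ≤ k ∧ k ≤ n ∧ q ≤ f k ω} ⊆
        s ∩ a ∪ s \ a ∩ {ω | ∃ k, t + 1 ≤ k ∧ k ≤ n ∧ q ≤ f k ω} := by
      rintro ω ⟨hωs, k, htk, hkn, hk⟩
      by_cases hωa : ω ∈ a
      · exact .inl ⟨hωs, hωa⟩
      · exact .inr ⟨⟨hωs, hωa⟩, k, htk.lt_of_ne (by rintro rfl; exact hωa hk), hkn, hk⟩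
    calc q * μ (s ∩ {ω | ∃ k, t ≤ k ∧ k ≤ n ∧ q ≤ f k ω})
        ≤ q * μ (s ∩ a) + q * μ (s \ a ∩ {ω | ∃ k, t + 1 ≤ k ∧ k ≤ n ∧ q ≤ f k ω}) := by
          rw [← mul_add]
          gcongr
          exact (measure_mono h_cover).trans (measure_union_le _ _)
      _ ≤ ∫⁻ ω in s ∩ a, f t ω ∂μ + ∫⁻ ω in s \ a, f (t + 1) ω ∂μ :=
          add_le_add (h_markov ht.le) (ih (ℱ.mono t.le_succ _ (hs.diff ha)))
      _ ≤ ∫⁻ ω in s ∩ a, f t ω ∂μ + ∫⁻ ω in s \ a, f t ω ∂μ :=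
          add_le_add le_rfl (h_step t ht _ (hs.diff ha))
      _ = ∫⁻ ω in s, f t ω ∂μ := lintegral_inter_add_sdiff _ _ (ℱ.le t _ ha)

theorem mul_measure_exists_le_le_lintegral {Ω : Type*} {m0 : MeasurableSpace Ω}
    {μ : Measure Ω} (ℱ : Filtration ℕ m0) {f : ℕ → Ω → ℝ≥0∞} {n : ℕ}
    (hf : ∀ t ≤ n, Measurable[ℱ t] (f t))
    (h_step : ∀ t < n, ∀ s, MeasurableSet[ℱ t] s →
      ∫⁻ ω in s, f (t + 1) ω ∂μ ≤ ∫⁻ ω in s, f t ω ∂μ) (q : ℝ≥0∞) :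
    q * μ {ω | ∃ t ≤ n, q ≤ f t ω} ≤ ∫⁻ ω, f 0 ω ∂μ := by
  simpa using mul_measure_inter_exists_le_le_setLIntegral ℱ hf h_step q n.zero_le
    (MeasurableSet.univ (α := Ω))

/-- The predictable quadratic variation of the sum of the `ε i • v i` over `1 ≤ i ≤ t`, with the
conditional variance of `ε i` replaced by its proxy `σ i ^ 2`. -/
noncomputable def varianceProxySum {Ω E : Type*} [Norm E] (σ : ℕ → Ω → ℝ) (v : ℕ → Ω → E) (t : ℕ)
    (ω : Ω) : ℝ :=
  ∑ i ∈ Finset.Icc 1 t, σ i ω ^ 2 * ‖v i ω‖ ^ 2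

/-- The process `exp (-κ * varianceProxySum σ v t) * cosh (l * ‖Y t‖)`, where
`κ = l ^ 2 / (2 * (1 - l * B))` is the bound for the log-Laplace transform at `l` of a Bernstein
variable with scale `B` and unit variance proxy. -/
noncomputable def coshPotential {Ω E : Type*} [Norm E] (B l : ℝ) (σ : ℕ → Ω → ℝ)
    (Y v : ℕ → Ω → E) (t : ℕ) (ω : Ω) : ℝ :=
  exp (-(l ^ 2 / (2 * (1 - l * B)) * varianceProxySum σ v t ω)) * cosh (l * ‖Y t ω‖)

/-- Up to time `n`, the process `Y` starts at `0` and moves by a norm-nonincreasing step from `Y t`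
to `u (t + 1)` followed by the noise term `ε (t + 1) • v (t + 1)` with `‖v (t + 1)‖ ≤ 1`.
Measurability is only required of the norms and inner products that enter `coshPotential`. -/
structure IsContractiveRecursion {Ω E : Type*} {m0 : MeasurableSpace Ω} [NormedAddCommGroup E]
    [InnerProductSpace ℝ E] (ℱ : Filtration ℕ m0) (ε : ℕ → Ω → ℝ) (Y u v : ℕ → Ω → E) (n : ℕ) :
    Prop where
  zero_eq (ω : Ω) : Y 0 ω = 0
  succ_eq (t : ℕ) (ht : t < n) (ω : Ω) : Y (t + 1) ω = u (t + 1) ω + ε (t + 1) ω • v (t + 1) ω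
  norm_le (t : ℕ) (ht : t < n) (ω : Ω) : ‖u (t + 1) ω‖ ≤ ‖Y t ω‖
  norm_le_one (t : ℕ) (ht : t < n) (ω : Ω) : ‖v (t + 1) ω‖ ≤ 1
  measurable_norm (t : ℕ) (ht : t ≤ n) : Measurable[ℱ t] fun ω ↦ ‖Y t ω‖
  measurable_norm_drift (t : ℕ) (ht : t < n) : Measurable[ℱ t] fun ω ↦ ‖u (t + 1) ω‖
  measurable_norm_coeff (t : ℕ) (ht : t < n) : Measurable[ℱ t] fun ω ↦ ‖v (t + 1) ω‖
  measurable_inner (t : ℕ) (ht : t < n) : Measurable[ℱ t] fun ω ↦ ⟪u (t + 1) ω, v (t + 1) ω⟫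

section VarianceProxySum

variable {Ω E : Type*} [Norm E] {σ : ℕ → Ω → ℝ} {v : ℕ → Ω → E}

theorem varianceProxySum_zero (ω : Ω) : varianceProxySum σ v 0 ω = 0 := by
  simp [varianceProxySum]

theorem varianceProxySum_succ (t : ℕ) (ω : Ω) : varianceProxySum σ v (t + 1) ω =
    varianceProxySum σ v t ω + σ (t + 1) ω ^ 2 * ‖v (t + 1) ω‖ ^ 2 :=
  Finset.sum_Icc_succ_top (by omega) _

theorem varianceProxySum_nonneg (t : ℕ) (ω : Ω) : 0 ≤ varianceProxySum σ v t ω :=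
  Finset.sum_nonneg fun _ _ ↦ by positivity

theorem varianceProxySum_mono (ω : Ω) : Monotone fun t ↦ varianceProxySum σ v t ω :=
  monotone_nat_of_le_succ fun t ↦ by
    rw [varianceProxySum_succ]
    exact le_add_of_nonneg_right (by positivity)

theorem measurable_varianceProxySum {m : MeasurableSpace Ω} {t : ℕ}
    (hσ : ∀ i < t, Measurable[m] (σ (i + 1)))
    (hv : ∀ i < t, Measurable[m] fun ω ↦ ‖v (i + 1) ω‖) :
    Measurable[m] (varianceProxySum σ v t) := by
  induction t with
  | zero => simpa only [funext varianceProxySum_zero] using measurable_const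
  | succ t ih =>
    rw [funext (varianceProxySum_succ t)]
    exact (ih (fun i hi ↦ hσ i (by omega)) fun i hi ↦ hv i (by omega)).add
      (((hσ t (by omega)).pow_const 2).mul ((hv t (by omega)).pow_const 2))

end VarianceProxySum

theorem exists_bernstein_exponent {v B r : ℝ} (hv : 0 ≤ v) (hB : 0 < B) (hr : 0 < r) :
    ∃ l : ℝ, 0 ≤ l ∧ l * B < 1 ∧
      l * r - l ^ 2 / (2 * (1 - l * B)) * v = r ^ 2 / (2 * (v + B * r)) := by
  rcases hv.eq_or_lt with rfl | hv
  · refine ⟨1 / (2 * B), by positivity, ?_, ?_⟩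
    · field_simp; norm_num
    · field_simp; ring
  · have : 0 < v + B * r := by positivity
    have h_sub : 1 - r / (v + B * r) * B = v / (v + B * r) := by
      field_simp; ring
    refine ⟨r / (v + B * r), by positivity, ?_, ?_⟩
    · rw [← sub_pos, h_sub]; positivity
    · rw [h_sub]; field_simp; ring

namespace IsContractiveRecursion

variable {Ω E : Type*} {m0 : MeasurableSpace Ω} {μ : Measure Ω} [NormedAddCommGroup E]
  [InnerProductSpace ℝ E] {ℱ : Filtration ℕ m0} {ε σ : ℕ → Ω → ℝ} {Y u v : ℕ → Ω → E} {n : ℕ}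
  {B l r : ℝ}

theorem measurable_varianceProxySum (h : IsContractiveRecursion ℱ ε Y u v n)
    (hσ : ∀ t < n, Measurable[ℱ t] (σ (t + 1))) {t k : ℕ} (htn : t ≤ n) (htk : t ≤ k + 1) :
    Measurable[ℱ k] (varianceProxySum σ v t) := by
  refine _root_.measurable_varianceProxySum (fun i hi ↦ ?_) fun i hi ↦ ?_
  · exact (hσ i (by omega)).mono (ℱ.mono (by omega)) le_rfl
  · exact (h.measurable_norm_coeff i (by omega)).mono (ℱ.mono (by omega)) le_rfl

theorem measurable_coshPotential (h : IsContractiveRecursion ℱ ε Y u v n)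
    (hσ : ∀ t < n, Measurable[ℱ t] (σ (t + 1))) {t : ℕ} (ht : t ≤ n) :
    Measurable[ℱ t] (coshPotential B l σ Y v t) :=
  (measurable_exp.comp ((h.measurable_varianceProxySum hσ ht t.le_succ).const_mul _).neg).mul
    (measurable_cosh.comp ((h.measurable_norm t ht).const_mul l))

theorem exp_mul_cosh_mul_one_add_le_coshPotential (h : IsContractiveRecursion ℱ ε Y u v n)
    (hB : 0 ≤ B) (hl : 0 ≤ l) (hlB : l * B < 1) {t : ℕ} (ht : t < n) (ω : Ω) :
    exp (-(l ^ 2 / (2 * (1 - l * B)) * varianceProxySum σ v (t + 1) ω)) *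
        cosh ‖l • u (t + 1) ω‖ *
        (1 + ‖l • v (t + 1) ω‖ ^ 2 * σ (t + 1) ω ^ 2 / (2 * (1 - ‖l • v (t + 1) ω‖ * B))) ≤
      coshPotential B l σ Y v t ω := by
  have : 0 < 2 * (1 - l * B) := by linarith
  have hlv_le : ‖l • v (t + 1) ω‖ ≤ l := by
    rw [norm_smul, norm_of_nonneg hl]
    exact mul_le_of_le_one_right hl (h.norm_le_one t ht ω)
  have h_cosh : cosh ‖l • u (t + 1) ω‖ ≤ cosh (l * ‖Y t ω‖) := by
    rw [norm_smul, norm_of_nonneg hl, cosh_le_cosh, abs_of_nonneg (by positivity),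
      abs_of_nonneg (by positivity)]
    exact mul_le_mul_of_nonneg_left (h.norm_le t ht ω) hl
  set d := l ^ 2 / (2 * (1 - l * B)) * (σ (t + 1) ω ^ 2 * ‖v (t + 1) ω‖ ^ 2) with hd
  have h_quad : ‖l • v (t + 1) ω‖ ^ 2 * σ (t + 1) ω ^ 2 / (2 * (1 - ‖l • v (t + 1) ω‖ * B)) ≤ d :=
    calc _ ≤ ‖l • v (t + 1) ω‖ ^ 2 * σ (t + 1) ω ^ 2 / (2 * (1 - l * B)) := by gcongr
      _ = d := by
        rw [norm_smul, norm_of_nonneg hl, hd]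
        ring
  rw [coshPotential, varianceProxySum_succ, mul_add (l ^ 2 / _), ← hd, neg_add, exp_add, mul_assoc,
    mul_assoc]
  refine mul_le_mul_of_nonneg_left ?_ (exp_pos _).le
  calc exp (-d) * (cosh ‖l • u (t + 1) ω‖ *
        (1 + ‖l • v (t + 1) ω‖ ^ 2 * σ (t + 1) ω ^ 2 / (2 * (1 - ‖l • v (t + 1) ω‖ * B))))
      ≤ exp (-d) * (cosh ‖l • u (t + 1) ω‖ * exp d) := by
        gcongr
        linarith [add_one_le_exp d]
    _ ≤ exp (-d) * (cosh (l * ‖Y t ω‖) * exp d) := by gcongr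
    _ = cosh (l * ‖Y t ω‖) := by
        rw [mul_left_comm, ← exp_add, neg_add_cancel, exp_zero, mul_one]

theorem setLIntegral_coshPotential_succ_le [SigmaFiniteFiltration μ ℱ]
    (h : IsContractiveRecursion ℱ ε Y u v n) (hB : 0 ≤ B)
    (hσ : ∀ t < n, Measurable[ℱ t] (σ (t + 1)))
    (hε : ∀ t < n, IsBernsteinNoise (ℱ t) μ (ε (t + 1)) (σ (t + 1)) B)
    (hl : 0 ≤ l) (hlB : l * B < 1) {t : ℕ} (ht : t < n) {s : Set Ω} (hs : MeasurableSet[ℱ t] s) :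
    ∫⁻ ω in s, ENNReal.ofReal (coshPotential B l σ Y v (t + 1) ω) ∂μ ≤
      ∫⁻ ω in s, ENNReal.ofReal (coshPotential B l σ Y v t ω) ∂μ := by
  have h_smul (ω : Ω) :
      l * ‖Y (t + 1) ω‖ = ‖l • u (t + 1) ω + ε (t + 1) ω • l • v (t + 1) ω‖ := by
    rw [smul_comm, ← smul_add, ← h.succ_eq t ht, norm_smul, norm_of_nonneg hl]
  have h_norm_u : Measurable[ℱ t] fun ω ↦ ‖l • u (t + 1) ω‖ := by
    simpa only [norm_smul] using (h.measurable_norm_drift t ht).const_mul ‖l‖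
  have h_norm_v : Measurable[ℱ t] fun ω ↦ ‖l • v (t + 1) ω‖ := by
    simpa only [norm_smul] using (h.measurable_norm_coeff t ht).const_mul ‖l‖
  have h_inner : Measurable[ℱ t] fun ω ↦ ⟪l • u (t + 1) ω, l • v (t + 1) ω⟫ := by
    simpa only [real_inner_smul_left, inner_smul_right] using
      ((h.measurable_inner t ht).const_mul l).const_mul l
  have h_scale (ω : Ω) : ‖l • v (t + 1) ω‖ * B < 1 := by
    rw [norm_smul, norm_of_nonneg hl]
    exact lt_of_le_of_lt (by gcongr; exact mul_le_of_le_one_right hl (h.norm_le_one t ht ω)) hlB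
  have h_weight : Measurable[ℱ t] fun ω ↦
      exp (-(l ^ 2 / (2 * (1 - l * B)) * varianceProxySum σ v (t + 1) ω)) :=
    measurable_exp.comp ((h.measurable_varianceProxySum hσ ht le_rfl).const_mul _).neg
  calc ∫⁻ ω in s, ENNReal.ofReal (coshPotential B l σ Y v (t + 1) ω) ∂μ
      ≤ _ := by
        simp only [coshPotential, h_smul]
        exact (hε t ht).setLIntegral_mul_cosh_norm_add_smul_le (ℱ.le t) hB
          ((hσ t ht).mono (ℱ.le t) le_rfl).aemeasurable h_norm_u h_norm_v h_inner h_scale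
          h_weight (fun ω ↦ (exp_pos _).le) hs
    _ ≤ ∫⁻ ω in s, ENNReal.ofReal (coshPotential B l σ Y v t ω) ∂μ :=
        lintegral_mono fun ω ↦
          ENNReal.ofReal_le_ofReal (h.exp_mul_cosh_mul_one_add_le_coshPotential hB hl hlB ht ω)

theorem lintegral_coshPotential_zero [IsProbabilityMeasure μ]
    (h : IsContractiveRecursion ℱ ε Y u v n) :
    ∫⁻ ω, ENNReal.ofReal (coshPotential B l σ Y v 0 ω) ∂μ = 1 := by
  simp [coshPotential, varianceProxySum_zero, h.zero_eq]

theorem measure_exists_le_norm_le_exp [IsProbabilityMeasure μ]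
    (h : IsContractiveRecursion ℱ ε Y u v n) (hB : 0 ≤ B)
    (hσ : ∀ t < n, Measurable[ℱ t] (σ (t + 1)))
    (hε : ∀ t < n, IsBernsteinNoise (ℱ t) μ (ε (t + 1)) (σ (t + 1)) B) {V : ℝ}
    (hV : ∀ᵐ ω ∂μ, varianceProxySum σ v n ω ≤ V) (hl : 0 ≤ l) (hlB : l * B < 1) :
    μ {ω | ∃ t ≤ n, r ≤ ‖Y t ω‖} ≤
      ENNReal.ofReal (2 * exp (-(l * r - l ^ 2 / (2 * (1 - l * B)) * V))) := by
  set κ := l ^ 2 / (2 * (1 - l * B))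
  have : 0 ≤ κ := div_nonneg (sq_nonneg l) (by linarith)
  set q := exp (l * r - κ * V) / 2 with hq
  have hq_pos : 0 < q := by positivity
  have h_level {t : ℕ} (ht : t ≤ n) {ω : Ω} (hω : varianceProxySum σ v n ω ≤ V)
      (hr_le : r ≤ ‖Y t ω‖) : q ≤ coshPotential B l σ Y v t ω :=
    calc q = exp (-(κ * V)) * (exp (l * r) / 2) := by rw [hq, sub_eq_neg_add, exp_add]; ring
      _ ≤ exp (-(κ * varianceProxySum σ v t ω)) * cosh (l * ‖Y t ω‖) := by
        have := (varianceProxySum_mono ω ht).trans hω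
        have : exp (l * r) ≤ exp (l * ‖Y t ω‖) := by gcongr
        have := exp_pos (-(l * ‖Y t ω‖))
        gcongr
        rw [cosh_eq]
        linarith
  have h_ville := mul_measure_exists_le_le_lintegral ℱ
    (fun t ht ↦ (h.measurable_coshPotential (B := B) (l := l) hσ ht).ennreal_ofReal)
    (fun t ht s hs ↦ h.setLIntegral_coshPotential_succ_le hB hσ hε hl hlB ht hs)
    (ENNReal.ofReal q)
  rw [h.lintegral_coshPotential_zero] at h_ville
  calc μ {ω | ∃ t ≤ n, r ≤ ‖Y t ω‖}
      ≤ μ {ω | ∃ t ≤ n, ENNReal.ofReal q ≤ ENNReal.ofReal (coshPotential B l σ Y v t ω)} := by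
        refine measure_mono_ae ?_
        filter_upwards [hV] with ω hω
        rintro ⟨t, ht, hr_le⟩
        exact ⟨t, ht, ENNReal.ofReal_le_ofReal (h_level ht hω hr_le)⟩
    _ ≤ 1 / ENNReal.ofReal q := (ENNReal.le_div_iff_mul_le (.inl (by simpa using hq_pos))
        (.inl ENNReal.ofReal_ne_top)).2 (by rwa [mul_comm])
    _ = ENNReal.ofReal (2 * exp (-(l * r - κ * V))) := by
        rw [← ENNReal.ofReal_one, ← ENNReal.ofReal_div_of_pos hq_pos, hq, exp_neg]
        congr 1
        field_simp

theorem measure_exists_le_norm_le [IsProbabilityMeasure μ]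
    (h : IsContractiveRecursion ℱ ε Y u v n) (hB : 0 < B)
    (hσ : ∀ t < n, Measurable[ℱ t] (σ (t + 1)))
    (hε : ∀ t < n, IsBernsteinNoise (ℱ t) μ (ε (t + 1)) (σ (t + 1)) B) {V : ℝ}
    (hV : ∀ᵐ ω ∂μ, varianceProxySum σ v n ω ≤ V) (hr : 0 ≤ r) :
    μ {ω | ∃ t ≤ n, r ≤ ‖Y t ω‖} ≤ ENNReal.ofReal (2 * exp (-(r ^ 2 / (2 * (V + B * r))))) := by
  rcases hr.eq_or_lt with rfl | hr_pos
  · exact prob_le_one.trans (by norm_num)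
  obtain ⟨ω, hω⟩ := hV.exists
  obtain ⟨l, hl, hlB, h_exponent⟩ :=
    exists_bernstein_exponent ((varianceProxySum_nonneg n ω).trans hω) hB hr_pos
  rw [← h_exponent]
  exact h.measure_exists_le_norm_le_exp hB.le hσ hε hV hl hlB

end IsContractiveRecursion

section OuterProd

variable {H : Type*} [NormedAddCommGroup H] [InnerProductSpace ℝ H]

theorem continuous_outerProd : Continuous (outerProd : H → H →L[ℝ] H) := by
  unfold outerProd
  fun_prop

theorem inner_outerProd_apply_self (x y : H) : ⟪outerProd x y, y⟫ = ⟪x, y⟫ ^ 2 := by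
  rw [outerProd, ContinuousLinearMap.smulRight_apply, innerSL_apply_apply, real_inner_smul_left, sq]

end OuterProd

section SymmetricEquiv

variable {H : Type*} [NormedAddCommGroup H] [InnerProductSpace ℝ H] {Q Q' : H ≃L[ℝ] H}

theorem norm_symm_apply_le_iff_of_isSymmetric (hQ : (Q : H →L[ℝ] H).IsSymmetric) (x : H) {c : ℝ}
    (hc : 0 ≤ c) : ‖Q.symm x‖ ≤ c ↔ ∀ y, ⟪x, y⟫ ≤ c * ‖Q y‖ := by
  have h_inner (y : H) : ⟪x, y⟫ = ⟪Q.symm x, Q y⟫ := by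
    simpa using hQ (Q.symm x) y
  refine ⟨fun h y ↦ ?_, fun h ↦ ?_⟩
  · rw [h_inner]
    exact (real_inner_le_norm _ _).trans (by gcongr)
  · have h_sq : ‖Q.symm x‖ * ‖Q.symm x‖ ≤ c * ‖Q.symm x‖ := by
      simpa [h_inner, sq] using h (Q.symm (Q.symm x))
    rcases (norm_nonneg (Q.symm x)).eq_or_lt with h_zero | h_pos
    · rwa [← h_zero]
    · exact le_of_mul_le_mul_right h_sq h_pos

theorem norm_symm_apply_le_norm_symm_apply (hQ : (Q : H →L[ℝ] H).IsSymmetric)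
    (hQ' : (Q' : H →L[ℝ] H).IsSymmetric) (hQQ' : ∀ y, ‖Q y‖ ≤ ‖Q' y‖) (x : H) :
    ‖Q'.symm x‖ ≤ ‖Q.symm x‖ := by
  refine (norm_symm_apply_le_iff_of_isSymmetric hQ' x (norm_nonneg _)).2 fun y ↦ ?_
  calc ⟪x, y⟫ ≤ ‖Q.symm x‖ * ‖Q y‖ :=
        (norm_symm_apply_le_iff_of_isSymmetric hQ x (norm_nonneg _)).1 le_rfl y
    _ ≤ ‖Q.symm x‖ * ‖Q' y‖ := by
        gcongr
        exact hQQ' y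

theorem inner_symm_apply_symm_apply (hQ : (Q : H →L[ℝ] H).IsSymmetric) (x y : H) :
    ⟪Q.symm x, Q.symm y⟫ = ⟪x, Ring.inverse ((Q : H →L[ℝ] H) ^ 2) y⟫ := by
  have h_inner := hQ (Q.symm x) (Q.symm (Q.symm y))
  rw [← Ring.inverse_pow, ContinuousLinearMap.ringInverse_equiv, ContinuousLinearMap.inverse_equiv]
  simpa [sq] using h_inner.symm

theorem norm_apply_sq_of_isSymmetric (hQ : (Q : H →L[ℝ] H).IsSymmetric) (y : H) :
    ‖Q y‖ ^ 2 = ⟪((Q : H →L[ℝ] H) ^ 2) y, y⟫ := by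
  rw [← real_inner_self_eq_norm_sq, sq]
  exact (hQ (Q y) y).symm

theorem norm_apply_sq_eq_add_inner_sq {x : H}
    (hQ : (Q : H →L[ℝ] H).IsSymmetric) (hQ' : (Q' : H →L[ℝ] H).IsSymmetric)
    (hQQ' : (Q' : H →L[ℝ] H) ^ 2 = (Q : H →L[ℝ] H) ^ 2 + outerProd x) (y : H) :
    ‖Q' y‖ ^ 2 = ‖Q y‖ ^ 2 + ⟪x, y⟫ ^ 2 := by
  rw [norm_apply_sq_of_isSymmetric hQ', norm_apply_sq_of_isSymmetric hQ, hQQ',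
    add_apply, inner_add_left, inner_outerProd_apply_self]

theorem norm_symm_apply_le_of_sq_eq_add_outerProd {x : H}
    (hQ : (Q : H →L[ℝ] H).IsSymmetric) (hQ' : (Q' : H →L[ℝ] H).IsSymmetric)
    (hQQ' : (Q' : H →L[ℝ] H) ^ 2 = (Q : H →L[ℝ] H) ^ 2 + outerProd x) (z : H) :
    ‖Q'.symm z‖ ≤ ‖Q.symm z‖ := by
  refine norm_symm_apply_le_norm_symm_apply hQ hQ' (fun y ↦ ?_) z
  refine le_of_sq_le_sq ?_ (norm_nonneg _)
  rw [norm_apply_sq_eq_add_inner_sq hQ hQ' hQQ']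
  exact le_add_of_nonneg_right (sq_nonneg _)

theorem norm_symm_apply_le_one_of_sq_eq_add_outerProd {x : H}
    (hQ : (Q : H →L[ℝ] H).IsSymmetric) (hQ' : (Q' : H →L[ℝ] H).IsSymmetric)
    (hQQ' : (Q' : H →L[ℝ] H) ^ 2 = (Q : H →L[ℝ] H) ^ 2 + outerProd x) :
    ‖Q'.symm x‖ ≤ 1 := by
  refine (norm_symm_apply_le_iff_of_isSymmetric hQ' x zero_le_one).2 fun y ↦ ?_
  rw [one_mul]
  refine le_of_sq_le_sq ?_ (norm_nonneg _)
  rw [norm_apply_sq_eq_add_inner_sq hQ hQ' hQQ']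
  exact le_add_of_nonneg_left (sq_nonneg _)

end SymmetricEquiv

section Measurability

variable {Ω H : Type*} {m : MeasurableSpace Ω} [NormedAddCommGroup H] [InnerProductSpace ℝ H]
  {Q : Ω → H ≃L[ℝ] H} {x y : Ω → H}

theorem stronglyMeasurable_inner_symm_apply (hQ : ∀ ω, (Q ω : H →L[ℝ] H).IsSymmetric)
    (hQ_sq : StronglyMeasurable fun ω ↦ (Q ω : H →L[ℝ] H) ^ 2)
    (hx : StronglyMeasurable x) (hy : StronglyMeasurable y) :
    StronglyMeasurable fun ω ↦ ⟪(Q ω).symm (x ω), (Q ω).symm (y ω)⟫ := by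
  have h_inverse : StronglyMeasurable fun ω ↦ Ring.inverse ((Q ω : H →L[ℝ] H) ^ 2) :=
    stronglyMeasurable_ringInverse hQ_sq fun ω ↦
      IsUnit.pow 2 ⟨(ContinuousLinearEquiv.unitsEquiv ℝ H).symm (Q ω), rfl⟩
  simp only [inner_symm_apply_symm_apply (hQ _)]
  exact hx.inner
    (isBoundedBilinearMap_apply.continuous.comp_stronglyMeasurable (h_inverse.prodMk hy))

theorem stronglyMeasurable_norm_symm_apply (hQ : ∀ ω, (Q ω : H →L[ℝ] H).IsSymmetric)
    (hQ_sq : StronglyMeasurable fun ω ↦ (Q ω : H →L[ℝ] H) ^ 2) (hx : StronglyMeasurable x) :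
    StronglyMeasurable fun ω ↦ ‖(Q ω).symm (x ω)‖ := by
  simp only [norm_eq_sqrt_real_inner]
  exact continuous_sqrt.comp_stronglyMeasurable (stronglyMeasurable_inner_symm_apply hQ hQ_sq hx hx)

end Measurability

section SelfNormalized

variable {H : Type*} [NormedAddCommGroup H] [InnerProductSpace ℝ H] {Ω : Type*}
  {m0 : MeasurableSpace Ω} {ℱ : Filtration ℕ m0} {X : ℕ → Ω → H} {ε : ℕ → Ω → ℝ} {n : ℕ}
  {Λ : H →L[ℝ] H} {Q : ℕ → Ω → H ≃L[ℝ] H}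

theorem stronglyMeasurable_sum_smul (hX : ∀ t < n, StronglyMeasurable[ℱ t] (X (t + 1)))
    (hε : ∀ t < n, StronglyMeasurable[ℱ (t + 1)] (ε (t + 1))) {t : ℕ} (ht : t ≤ n) :
    StronglyMeasurable[ℱ t] fun ω ↦ ∑ i ∈ Finset.Icc 1 t, ε i ω • X i ω := by
  refine Finset.stronglyMeasurable_fun_sum _ fun i hi ↦ ?_
  obtain ⟨hi_pos, hi_le⟩ := Finset.mem_Icc.1 hi
  obtain ⟨k, rfl⟩ := Nat.exists_eq_add_of_le' hi_pos
  exact ((hε k (by omega)).mono (ℱ.mono hi_le)).smul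
    ((hX k (by omega)).mono (ℱ.mono (by omega)))

theorem stronglyMeasurable_sq_of_eq_add_sum_outerProd
    (hX : ∀ t < n, StronglyMeasurable[ℱ t] (X (t + 1)))
    (hQ_sq : ∀ t ω, (Q t ω : H →L[ℝ] H) ^ 2 = Λ + ∑ i ∈ Finset.Icc 1 t, outerProd (X i ω))
    {t k : ℕ} (htn : t ≤ n) (htk : t ≤ k + 1) :
    StronglyMeasurable[ℱ k] fun ω ↦ (Q t ω : H →L[ℝ] H) ^ 2 := by
  simp only [hQ_sq]
  refine stronglyMeasurable_const.add (Finset.stronglyMeasurable_fun_sum _ fun i hi ↦ ?_)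
  obtain ⟨hi_pos, hi_le⟩ := Finset.mem_Icc.1 hi
  obtain ⟨j, rfl⟩ := Nat.exists_eq_add_of_le' hi_pos
  exact continuous_outerProd.comp_stronglyMeasurable
    ((hX j (by omega)).mono (ℱ.mono (by omega)))

theorem isContractiveRecursion_symm_apply_sum_smul
    (hX : ∀ t < n, StronglyMeasurable[ℱ t] (X (t + 1)))
    (hε : ∀ t < n, StronglyMeasurable[ℱ (t + 1)] (ε (t + 1)))
    (hQ : ∀ t ω, (Q t ω : H →L[ℝ] H).IsSymmetric)
    (hQ_sq : ∀ t ω, (Q t ω : H →L[ℝ] H) ^ 2 = Λ + ∑ i ∈ Finset.Icc 1 t, outerProd (X i ω)) :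
    IsContractiveRecursion ℱ ε (fun t ω ↦ (Q t ω).symm (∑ i ∈ Finset.Icc 1 t, ε i ω • X i ω))
      (fun t ω ↦ (Q t ω).symm (∑ i ∈ Finset.Icc 1 (t - 1), ε i ω • X i ω))
      (fun t ω ↦ (Q t ω).symm (X t ω)) n := by
  have h_sum {t : ℕ} (ht : t ≤ n) := stronglyMeasurable_sum_smul hX hε ht
  have h_sq {t k : ℕ} (htn : t ≤ n) (htk : t ≤ k + 1) :=
    stronglyMeasurable_sq_of_eq_add_sum_outerProd hX hQ_sq htn htk
  have h_update (t : ℕ) (ω : Ω) : (Q (t + 1) ω : H →L[ℝ] H) ^ 2 =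
      (Q t ω : H →L[ℝ] H) ^ 2 + outerProd (X (t + 1) ω) := by
    rw [hQ_sq, hQ_sq, Finset.sum_Icc_succ_top (by omega), add_assoc]
  exact {
    zero_eq := fun ω ↦ by simp
    succ_eq := fun t _ ω ↦ by
      rw [Finset.sum_Icc_succ_top (by omega), map_add, map_smul, Nat.add_sub_cancel]
    norm_le := fun t _ ω ↦
      norm_symm_apply_le_of_sq_eq_add_outerProd (hQ t ω) (hQ (t + 1) ω) (h_update t ω) _
    norm_le_one := fun t _ ω ↦
      norm_symm_apply_le_one_of_sq_eq_add_outerProd (hQ t ω) (hQ (t + 1) ω) (h_update t ω)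
    measurable_norm := fun t ht ↦
      (stronglyMeasurable_norm_symm_apply (hQ t) (h_sq ht t.le_succ) (h_sum ht)).measurable
    measurable_norm_drift := fun t ht ↦
      (stronglyMeasurable_norm_symm_apply (hQ (t + 1)) (h_sq ht le_rfl) (h_sum ht.le)).measurable
    measurable_norm_coeff := fun t ht ↦
      (stronglyMeasurable_norm_symm_apply (hQ (t + 1)) (h_sq ht le_rfl) (hX t ht)).measurable
    measurable_inner := fun t ht ↦ (stronglyMeasurable_inner_symm_apply (hQ (t + 1))
      (h_sq ht le_rfl) (h_sum ht.le) (hX t ht)).measurable }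

end SelfNormalized

theorem stmt_4_general {H : Type*} [NormedAddCommGroup H] [InnerProductSpace ℝ H]
    {Ω : Type*} {m0 : MeasurableSpace Ω} {μ : Measure Ω} [IsProbabilityMeasure μ]
    {ℱ : Filtration ℕ m0} {X : ℕ → Ω → H} {ε σ : ℕ → Ω → ℝ} {Λ : H →L[ℝ] H}
    {Q : ℕ → Ω → H ≃L[ℝ] H} {n : ℕ} {B V r : ℝ}
    (hX : ∀ t < n, StronglyMeasurable[ℱ t] (X (t + 1)))
    (hε_meas : ∀ t < n, StronglyMeasurable[ℱ (t + 1)] (ε (t + 1)))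
    (hQ : ∀ t ω, (Q t ω : H →L[ℝ] H).IsSymmetric)
    (hQ_sq : ∀ t ω, (Q t ω : H →L[ℝ] H) ^ 2 = Λ + ∑ i ∈ Finset.Icc 1 t, outerProd (X i ω))
    (hB : 0 < B) (hσ : ∀ t < n, Measurable[ℱ t] (σ (t + 1)))
    (hε : ∀ t < n, IsBernsteinNoise (ℱ t) μ (ε (t + 1)) (σ (t + 1)) B)
    (hV : ∀ᵐ ω ∂μ, ∑ i ∈ Finset.Icc 1 n, σ i ω ^ 2 * ‖(Q i ω).symm (X i ω)‖ ^ 2 ≤ V)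
    (hr : 0 ≤ r) :
    μ {ω | ∃ t ≤ n, r ≤ ‖(Q t ω).symm (∑ i ∈ Finset.Icc 1 t, ε i ω • X i ω)‖} ≤
      ENNReal.ofReal (2 * exp (-(r ^ 2 / (2 * (V + B * r))))) :=
  (isContractiveRecursion_symm_apply_sum_smul hX hε_meas hQ hQ_sq).measure_exists_le_norm_le
    hB hσ hε hV hr

theorem stmt_4
    {H : Type*} [NormedAddCommGroup H] [InnerProductSpace ℝ H] [CompleteSpace H]
    [SecondCountableTopology H]
    {Ω : Type*} {m0 : MeasurableSpace Ω} {μ : Measure Ω} [IsProbabilityMeasure μ]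
    (ℱ : Filtration ℕ m0)
    (X : ℕ → Ω → H) (ε : ℕ → Ω → ℝ)
    (hX : ∀ t, 1 ≤ t → StronglyMeasurable[ℱ (t - 1)] (X t))
    (hεmeas : ∀ t, 1 ≤ t → StronglyMeasurable[ℱ t] (ε t))
    (hεint : ∀ t, 1 ≤ t → Integrable (ε t) μ)
    (hε0 : ∀ t, 1 ≤ t → μ[ε t | ℱ (t - 1)] =ᵐ[μ] 0)
    (ρ : ℝ) (hρ : 0 < ρ)
    (Q Qinv : ℕ → Ω → H →L[ℝ] H)
    (hQpos : ∀ t ω, (Q t ω).IsPositive)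
    (hQsq : ∀ t ω, Q t ω ∘L Q t ω =
      ρ • (1 : H →L[ℝ] H) + ∑ i ∈ Finset.Icc 1 t, outerProd (X i ω))
    (hQinv : ∀ t ω, Qinv t ω ∘L Q t ω = 1 ∧ Q t ω ∘L Qinv t ω = 1)
    (n : ℕ) (hn : 1 ≤ n)
    (B : ℝ) (hB : 0 < B) (σ : ℕ → Ω → ℝ)
    (hσmeas : ∀ t, 1 ≤ t → t ≤ n → StronglyMeasurable[ℱ (t - 1)] (σ t))
    (hmom : ∀ t m, Integrable (fun ω => |ε t ω| ^ m) μ)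
    (hbern : ∀ t, 1 ≤ t → t ≤ n → ∀ m : ℕ, 2 ≤ m →
      μ[fun ω => |ε t ω| ^ m | ℱ (t - 1)] ≤ᵐ[μ]
        fun ω => (1 / 2) * (Nat.factorial m : ℝ) * B ^ (m - 2) * σ t ω ^ 2)
    (C : ℝ) (hC : 0 ≤ C)
    (hCn : ∀ᵐ ω ∂μ, ∑ i ∈ Finset.Icc 1 n, σ i ω ^ 2 * ‖Qinv i ω (X i ω)‖ ^ 2 ≤ C ^ 2)
    (r : ℝ) (hr : 0 ≤ r) :
    μ {ω | ∃ t, 1 ≤ t ∧ t ≤ n ∧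
        r ≤ ‖Qinv t ω (∑ i ∈ Finset.Icc 1 t, ε i ω • X i ω)‖} ≤
      ENNReal.ofReal (2 * Real.exp (-(r ^ 2 / (2 * (C ^ 2 + B * r))))) := by
  have hε (t : ℕ) (ht : t < n) : IsBernsteinNoise (ℱ t) μ (ε (t + 1)) (σ (t + 1)) B :=
    ⟨hεint (t + 1) t.succ_pos, hε0 (t + 1) t.succ_pos, hmom (t + 1), hbern (t + 1) t.succ_pos ht⟩
  let Qequiv (t : ℕ) (ω : Ω) : H ≃L[ℝ] H := .equivOfInverse (Q t ω) (Qinv t ω)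
    (DFunLike.congr_fun (hQinv t ω).1) (DFunLike.congr_fun (hQinv t ω).2)
  have h_bound := stmt_4_general (Q := Qequiv) (fun t _ ↦ hX (t + 1) t.succ_pos)
    (fun t _ ↦ hεmeas (t + 1) t.succ_pos) (fun t ω ↦ (hQpos t ω).isSymmetric)
    (fun t ω ↦ (sq _).trans (hQsq t ω)) hB
    (fun t ht ↦ (hσmeas (t + 1) t.succ_pos ht).measurable) hε hCn hr
  refine (measure_mono ?_).trans h_bound
  rintro ω ⟨t, -, ht, hr_le⟩
  exact ⟨t, ht, hr_le⟩
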